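/- Let H be a bounded operator on a Hilbert space and ε > 0. Then for every δ > 0 there exists τ > 0 with 0 < τ < ε such that the Hausdorff distance between Spec_{ε−τ}(H) and Spec_{ε+τ}(H) is at most δ. In other words, the map ε ↦ Spec_ε(H) is continuous in the Hausdorff metric. -/

import Mathlib

open Classical

variable {E : Type*} [NormedAddCommGroup E] [InnerProductSpace ℂ E] [CompleteSpace E]

/-- The lower norm function `ρ_H(λ) = ‖(H−λ)⁻¹‖⁻¹` off the spectrum, `0` on it. -/
noncomputable def lowerNorm (H : E →L[ℂ] E) (z : ℂ) : ℝ :=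
  if z ∈ spectrum ℂ H then 0
  else ‖Ring.inverse (algebraMap ℂ (E →L[ℂ] E) z - H)‖⁻¹

/-- The `ε`-pseudospectrum `Spec_ε(H) = {z | ρ_H(z) ≤ ε}`. -/
def pseudoSpectrum (H : E →L[ℂ] E) (ε : ℝ) : Set ℂ :=
  {z : ℂ | lowerNorm H z ≤ ε}

/-!
A Hilbert-space valued holomorphic `f` bounded by `M` on the circle of radius `R` about `c`
satisfies `‖f c‖ ^ 2 + (R * ‖f' c‖) ^ 2 ≤ M ^ 2`: by the parallelogram law, the even part of `f`
about `c` and its odd part, divided by `z - c` and scaled by `R`, together have squared norm at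
most `M ^ 2` on the circle, and the maximum principle transports this bound to `c`.

For the resolvent the derivative `-(resolvent H c) ^ 2` is invertible, hence bounded below, so
`‖resolvent H c‖ < M`: the resolvent norm has no local maximum, and `ρ_H` has no local minimum
off the spectrum. Thus every point of the level set `ρ_H = ε` is a limit of points with `ρ_H < ε`,
and compactness of the sublevel sets makes this approximation uniform.
-/

open Filter Metric Set Topology

section SublevelSets

variable {X : Type*} [PseudoMetricSpace X] {g : X → ℝ} {ε t : ℝ}

theorem exists_mem_ball_lt_of_not_isLocalMin {x : X} (hx : g x ≤ ε)
    (hmin : g x = ε → ¬IsLocalMin g x) {δ : ℝ} (hδ : 0 < δ) : ∃ y ∈ ball x δ, g y < ε := by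
  rcases hx.lt_or_eq with hlt | rfl
  · exact ⟨x, mem_ball_self hδ, hlt⟩
  · have hfreq : ∃ᶠ y in 𝓝 x, g y < g x := by
      simpa only [IsLocalMin, IsMinFilter, not_eventually, not_le] using hmin rfl
    obtain ⟨y, hy, hmem⟩ := (hfreq.and_eventually (ball_mem_nhds x hδ)).exists
    exact ⟨y, hmem, hy⟩

theorem eventually_sublevel_subset_thickening (hg : LowerSemicontinuous g) (ht : ε < t)
    (hcomp : IsCompact {x | g x ≤ t}) (hmin : ∀ x, g x = ε → ¬IsLocalMin g x)
    {δ : ℝ} (hδ : 0 < δ) :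
    ∀ᶠ p : ℝ × ℝ in 𝓝 (ε, ε), {x | g x ≤ p.2} ⊆ thickening δ {x | g x ≤ p.1} := by
  have hlocal : ∀ x ∈ {x | g x ≤ t}, ∀ᶠ q : (ℝ × ℝ) × X in 𝓝 ((ε, ε), x),
      g q.2 ≤ q.1.2 → q.2 ∈ thickening δ {x | g x ≤ q.1.1} := by
    intro x _
    have hlevels : Tendsto (fun q : (ℝ × ℝ) × X ↦ q.1) (𝓝 ((ε, ε), x)) (𝓝 (ε, ε)) :=
      continuous_fst.tendsto _
    have hpoint : Tendsto (fun q : (ℝ × ℝ) × X ↦ q.2) (𝓝 ((ε, ε), x)) (𝓝 x) :=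
      continuous_snd.tendsto _
    rcases lt_or_ge ε (g x) with habove | hbelow
    · obtain ⟨s, hεs, hsx⟩ := exists_between habove
      filter_upwards [hlevels.snd_nhds.eventually_lt_const hεs, hpoint.eventually (hg x s hsx)]
        with q hq hgq hle
      exact absurd (hle.trans_lt hq) hgq.not_gt
    · obtain ⟨y, hy, hgy⟩ := exists_mem_ball_lt_of_not_isLocalMin hbelow (hmin x) hδ
      filter_upwards [hlevels.fst_nhds.eventually_const_lt hgy,
        hpoint.eventually (isOpen_ball.mem_nhds (mem_ball_comm.1 hy))] with q hq hqy _
      exact mem_thickening_iff.2 ⟨y, hq.le, hqy⟩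
  filter_upwards [hcomp.eventually_forall_of_forall_eventually
      (P := fun p x ↦ g x ≤ p.2 → x ∈ thickening δ {x | g x ≤ p.1}) hlocal,
    continuousAt_snd.eventually_lt_const ht] with p hp hpt x hx
  exact hp x (le_trans hx hpt.le) hx

theorem tendsto_hausdorffDist_sublevel (hg : LowerSemicontinuous g) (ht : ε < t)
    (hcomp : IsCompact {x | g x ≤ t}) (hmin : ∀ x, g x = ε → ¬IsLocalMin g x) :
    Tendsto (fun p : ℝ × ℝ ↦ hausdorffDist {x | g x ≤ p.1} {x | g x ≤ p.2}) (𝓝 (ε, ε)) (𝓝 0) := by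
  refine tendsto_order.2 ⟨fun a ha ↦ .of_forall fun p ↦ ha.trans_le hausdorffDist_nonneg,
    fun δ hδ ↦ ?_⟩
  have hsub := eventually_sublevel_subset_thickening hg ht hcomp hmin (half_pos hδ)
  filter_upwards [hsub, (continuous_swap.tendsto (ε, ε)).eventually hsub] with p h₂₁ h₁₂
  have exists_near {r s : ℝ} (h : {x | g x ≤ r} ⊆ thickening (δ / 2) {x | g x ≤ s}) :
      ∀ x ∈ {x | g x ≤ r}, ∃ y ∈ {x | g x ≤ s}, dist x y ≤ δ / 2 := fun x hx ↦
    (mem_thickening_iff.1 (h hx)).imp fun _ hy ↦ hy.imp_right le_of_lt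
  exact (hausdorffDist_le_of_mem_dist (half_pos hδ).le (exists_near h₁₂)
    (exists_near h₂₁)).trans_lt (half_lt_self hδ)

end SublevelSets

section MaximumPrinciple

theorem sq_norm_add_sq_norm_le_of_forall_mem_frontier {V F G : Type*}
    [NormedAddCommGroup V] [NormedSpace ℂ V] [Nontrivial V]
    [NormedAddCommGroup F] [NormedSpace ℂ F] [NormedAddCommGroup G] [NormedSpace ℂ G]
    {U : Set V} {f : V → F} {g : V → G} {M : ℝ} (hU : Bornology.IsBounded U)
    (hf : DiffContOnCl ℂ f U) (hg : DiffContOnCl ℂ g U)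
    (hM : ∀ z ∈ frontier U, ‖f z‖ ^ 2 + ‖g z‖ ^ 2 ≤ M ^ 2) {z : V} (hz : z ∈ closure U) :
    ‖f z‖ ^ 2 + ‖g z‖ ^ 2 ≤ M ^ 2 := by
  let pair : V → WithLp 2 (F × G) := fun z ↦ WithLp.toLp 2 (f z, g z)
  have norm_pair_le_iff (z : V) : ‖pair z‖ ≤ |M| ↔ ‖f z‖ ^ 2 + ‖g z‖ ^ 2 ≤ M ^ 2 := by
    rw [← abs_norm (pair z), ← sq_le_sq, WithLp.prod_norm_sq_eq_of_L2]
    rfl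
  have hpair : DiffContOnCl ℂ pair U :=
    (WithLp.prodContinuousLinearEquiv 2 ℂ F G).symm.differentiable.comp_diffContOnCl
      ⟨hf.differentiableOn.prodMk hg.differentiableOn, hf.continuousOn.prodMk hg.continuousOn⟩
  exact (norm_pair_le_iff z).1 <| Complex.norm_le_of_forall_mem_frontier_norm_le hU hpair
    (fun w hw ↦ (norm_pair_le_iff w).2 (hM w hw)) hz

variable {F G : Type*} [NormedAddCommGroup F] {c : ℂ} {R M : ℝ}

theorem diffContOnCl_dslope [NormedSpace ℂ F] [CompleteSpace F] {f : ℂ → F} (hR : 0 < R)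
    (hf : DiffContOnCl ℂ f (ball c R)) : DiffContOnCl ℂ (dslope f c) (ball c R) :=
  .mk_ball ((Complex.differentiableOn_dslope (ball_mem_nhds c hR)).2 hf.differentiableOn)
    ((continuousOn_dslope (closedBall_mem_nhds c hR)).2
      ⟨hf.continuousOn_ball, hf.differentiableAt isOpen_ball (mem_ball_self hR)⟩)

theorem sq_norm_add_sq_mul_norm_deriv_le_of_eq_zero [NormedSpace ℂ F] [NormedAddCommGroup G]
    [NormedSpace ℂ G] [CompleteSpace G] {f : ℂ → F} {g : ℂ → G} (hR : 0 < R)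
    (hf : DiffContOnCl ℂ f (ball c R)) (hg : DiffContOnCl ℂ g (ball c R)) (hgc : g c = 0)
    (hM : ∀ z ∈ sphere c R, ‖f z‖ ^ 2 + ‖g z‖ ^ 2 ≤ M ^ 2) :
    ‖f c‖ ^ 2 + (R * ‖deriv g c‖) ^ 2 ≤ M ^ 2 := by
  let q : ℂ → G := (R : ℂ) • dslope g c
  have norm_q (z : ℂ) : ‖q z‖ = R * ‖dslope g c z‖ := by
    simp only [q, Pi.smul_apply, norm_smul, Complex.norm_of_nonneg hR.le]
  have norm_q_of_mem_sphere {z : ℂ} (hz : z ∈ sphere c R) : ‖q z‖ = ‖g z‖ := by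
    rw [norm_q, dslope_of_ne _ (ne_of_mem_sphere hz hR.ne'), slope_def_module, hgc, sub_zero,
      norm_smul, norm_inv, mem_sphere_iff_norm.1 hz, mul_inv_cancel_left₀ hR.ne']
  rw [← dslope_same, ← norm_q]
  refine sq_norm_add_sq_norm_le_of_forall_mem_frontier isBounded_ball hf
    ((diffContOnCl_dslope hR hg).const_smul (R : ℂ)) (fun z hz ↦ ?_)
    (subset_closure (mem_ball_self hR))
  rw [frontier_ball c hR.ne'] at hz
  exact norm_q_of_mem_sphere hz ▸ hM z hz

variable [InnerProductSpace ℂ F]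

theorem sq_norm_half_add_add_sq_norm_half_sub (x y : F) :
    ‖(2⁻¹ : ℂ) • (x + y)‖ ^ 2 + ‖(2⁻¹ : ℂ) • (x - y)‖ ^ 2 = (‖x‖ ^ 2 + ‖y‖ ^ 2) / 2 := by
  have hlaw := parallelogram_law_with_norm ℂ x y
  simp only [norm_smul, norm_inv, Complex.norm_ofNat]
  linarith

theorem sq_norm_add_sq_mul_norm_deriv_sub_le [CompleteSpace F] {f g : ℂ → F} (hR : 0 < R)
    (hf : DiffContOnCl ℂ f (ball c R)) (hg : DiffContOnCl ℂ g (ball c R)) (hfg : f c = g c)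
    (hfM : ∀ z ∈ sphere c R, ‖f z‖ ≤ M) (hgM : ∀ z ∈ sphere c R, ‖g z‖ ≤ M) :
    ‖f c‖ ^ 2 + (R * ‖(2⁻¹ : ℂ) • (deriv f c - deriv g c)‖) ^ 2 ≤ M ^ 2 := by
  let mean : ℂ → F := (2⁻¹ : ℂ) • (f + g)
  let halfDiff : ℂ → F := (2⁻¹ : ℂ) • (f - g)
  have mean_center : mean c = f c := by
    simp only [mean, Pi.smul_apply, Pi.add_apply, ← hfg]
    module
  have halfDiff_center : halfDiff c = 0 := by
    simp only [halfDiff, Pi.smul_apply, Pi.sub_apply, hfg, sub_self, smul_zero]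
  have deriv_halfDiff : deriv halfDiff c = (2⁻¹ : ℂ) • (deriv f c - deriv g c) :=
    (((hf.differentiableAt isOpen_ball (mem_ball_self hR)).hasDerivAt.sub
      (hg.differentiableAt isOpen_ball (mem_ball_self hR)).hasDerivAt).const_smul _).deriv
  rw [← mean_center, ← deriv_halfDiff]
  refine sq_norm_add_sq_mul_norm_deriv_le_of_eq_zero hR ((hf.add hg).const_smul _)
    ((hf.sub hg).const_smul _) halfDiff_center fun z hz ↦ ?_
  calc ‖mean z‖ ^ 2 + ‖halfDiff z‖ ^ 2
      = (‖f z‖ ^ 2 + ‖g z‖ ^ 2) / 2 := sq_norm_half_add_add_sq_norm_half_sub _ _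
    _ ≤ (M ^ 2 + M ^ 2) / 2 := by
      gcongr
      exacts [hfM z hz, hgM z hz]
    _ = M ^ 2 := add_self_div_two _

theorem sq_norm_add_sq_mul_norm_deriv_le [CompleteSpace F] {f : ℂ → F} (hR : 0 < R)
    (hf : DiffContOnCl ℂ f (ball c R)) (hM : ∀ z ∈ sphere c R, ‖f z‖ ≤ M) :
    ‖f c‖ ^ 2 + (R * ‖deriv f c‖) ^ 2 ≤ M ^ 2 := by
  let reflection : ℂ → ℂ := fun z ↦ 2 * c - z
  have reflection_center : reflection c = c := by
    simp only [reflection]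
    ring
  have dist_reflection (z : ℂ) : dist (reflection z) c = dist z c := by
    rw [dist_eq_norm, dist_eq_norm, ← norm_neg]
    congr 1
    simp only [reflection]
    ring
  have hcomp : DiffContOnCl ℂ (f ∘ reflection) (ball c R) :=
    hf.comp (by fun_prop : Differentiable ℂ reflection).diffContOnCl
      fun z hz ↦ (dist_reflection z).trans_lt hz
  have deriv_comp : deriv (f ∘ reflection) c = -deriv f c :=
    (deriv_comp_const_sub f (2 * c) c).trans (by rw [show 2 * c - c = c from reflection_center])
  have hderiv : deriv f c = (2⁻¹ : ℂ) • (deriv f c - deriv (f ∘ reflection) c) := by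
    rw [deriv_comp]
    module
  rw [hderiv]
  exact sq_norm_add_sq_mul_norm_deriv_sub_le hR hf hcomp (congrArg f reflection_center.symm) hM
    fun z hz ↦ hM _ ((dist_reflection z).trans hz)

theorem sq_norm_add_sq_le_of_le_norm_deriv_apply [CompleteSpace F] {V : Type*}
    [NormedAddCommGroup V] [NormedSpace ℂ V] [Nontrivial V] {f : ℂ → V →L[ℂ] F} {k : ℝ}
    (hR : 0 < R) (hf : DiffContOnCl ℂ f (ball c R)) (hM : ∀ z ∈ sphere c R, ‖f z‖ ≤ M)
    (hk₀ : 0 ≤ k) (hk : ∀ u, k * ‖u‖ ≤ ‖deriv f c u‖) :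
    ‖f c‖ ^ 2 + (R * k) ^ 2 ≤ M ^ 2 := by
  have hfc : DifferentiableAt ℂ f c := hf.differentiableAt isOpen_ball (mem_ball_self hR)
  have happly (u : V) : ‖f c u‖ ^ 2 ≤ (M ^ 2 - (R * k) ^ 2) * ‖u‖ ^ 2 := by
    have hfu : DiffContOnCl ℂ (fun z ↦ f z u) (ball c R) :=
      (ContinuousLinearMap.apply ℂ F u).differentiable.comp_diffContOnCl hf
    have hderiv : deriv (fun z ↦ f z u) c = deriv f c u :=
      (hfc.hasDerivAt.clm_apply (hasDerivAt_const c u)).deriv.trans (by simp)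
    have hle := sq_norm_add_sq_mul_norm_deriv_le hR hfu
      fun z hz ↦ (f z).le_of_opNorm_le (hM z hz) u
    rw [hderiv] at hle
    have hlow : (R * (k * ‖u‖)) ^ 2 ≤ (R * ‖deriv f c u‖) ^ 2 := by
      gcongr
      exact hk u
    linarith
  have hnonneg : 0 ≤ M ^ 2 - (R * k) ^ 2 := by
    obtain ⟨u, hu⟩ := exists_ne (0 : V)
    exact nonneg_of_mul_nonneg_left ((sq_nonneg _).trans (happly u)) (by positivity)
  have hnorm : ‖f c‖ ≤ √(M ^ 2 - (R * k) ^ 2) := by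
    refine (f c).opNorm_le_bound (Real.sqrt_nonneg _) fun u ↦ ?_
    refine le_of_sq_le_sq ?_ (by positivity)
    rw [mul_pow, Real.sq_sqrt hnonneg]
    exact happly u
  exact le_sub_iff_add_le.1 ((Real.le_sqrt (norm_nonneg _) hnonneg).1 hnorm)

theorem norm_lt_of_isUnit_deriv {f : ℂ → E →L[ℂ] E} [Nontrivial E] (hR : 0 < R)
    (hf : DiffContOnCl ℂ f (ball c R)) (hM : ∀ z ∈ sphere c R, ‖f z‖ ≤ M)
    (hunit : IsUnit (deriv f c)) : ‖f c‖ < M := by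
  obtain ⟨k, hk₀, hk⟩ := antilipschitzWith_iff_exists_mul_le_norm.1
    (ContinuousLinearMap.antilipschitz_of_isEmbedding _
      (ContinuousLinearMap.isHomeomorph_of_isUnit hunit).isEmbedding)
  have hle := sq_norm_add_sq_le_of_le_norm_deriv_apply hR hf hM hk₀.le hk
  have hgap : 0 < (R * k) ^ 2 := by positivity
  obtain ⟨z, hz⟩ := (NormedSpace.sphere_nonempty (x := c)).2 hR.le
  exact lt_of_pow_lt_pow_left₀ 2 ((norm_nonneg _).trans (hM z hz)) (by linarith)

theorem norm_resolvent_lt [Nontrivial E] {H : E →L[ℂ] E} (hR : 0 < R)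
    (hball : closedBall c R ⊆ resolventSet ℂ H) (hM : ∀ z ∈ sphere c R, ‖resolvent H z‖ ≤ M) :
    ‖resolvent H c‖ < M := by
  have hderiv {z : ℂ} (hz : z ∈ resolventSet ℂ H) :
      HasDerivAt (resolvent H) (-resolvent H z ^ 2) z :=
    spectrum.hasDerivAt_resolvent_const_left hz
  have hc : c ∈ resolventSet ℂ H := hball (mem_closedBall_self hR.le)
  refine norm_lt_of_isUnit_deriv hR (DifferentiableOn.diffContOnCl_ball (fun z hz ↦
    (hderiv hz).differentiableAt.differentiableWithinAt) hball) hM ?_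
  rw [(hderiv hc).deriv]
  exact ((spectrum.isUnit_resolvent.1 hc).pow 2).neg

end MaximumPrinciple

theorem norm_resolvent_pos_iff {𝕜 A : Type*} [CommRing 𝕜] [NormedRing A] [Algebra 𝕜 A]
    [Nontrivial A] {a : A} {z : 𝕜} : 0 < ‖resolvent a z‖ ↔ z ∈ resolventSet 𝕜 a := by
  rw [norm_pos_iff, ne_eq, ← spectrum.mem_spectrum_iff_resolvent_zero, spectrum, notMem_compl_iff]

section LowerNorm

variable {V : Type*} [NormedAddCommGroup V] [InnerProductSpace ℂ V] {z : ℂ}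

theorem lowerNorm_eq_inv_norm_resolvent (H : V →L[ℂ] V) (z : ℂ) :
    lowerNorm H z = ‖resolvent H z‖⁻¹ := by
  unfold lowerNorm
  split_ifs with hz
  · rw [spectrum.resolvent_zero_of_mem_spectrum hz, norm_zero, inv_zero]
  · rfl

theorem lowerNorm_nonneg (H : V →L[ℂ] V) (z : ℂ) : 0 ≤ lowerNorm H z := by
  rw [lowerNorm_eq_inv_norm_resolvent]
  positivity

theorem lowerNorm_pos_iff [Nontrivial V] {H : V →L[ℂ] V} :
    0 < lowerNorm H z ↔ z ∈ resolventSet ℂ H := by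
  rw [lowerNorm_eq_inv_norm_resolvent, inv_pos, norm_resolvent_pos_iff]

theorem lowerSemicontinuous_lowerNorm [Nontrivial E] (H : E →L[ℂ] E) :
    LowerSemicontinuous (lowerNorm H) := by
  intro z
  by_cases hz : z ∈ resolventSet ℂ H
  · have hcont : ContinuousAt (resolvent H) z :=
      (spectrum.hasDerivAt_resolvent_const_left hz).continuousAt
    refine ContinuousAt.lowerSemicontinuousAt ?_
    simp only [funext (lowerNorm_eq_inv_norm_resolvent H)]
    exact hcont.norm.inv₀ (norm_resolvent_pos_iff.2 hz).ne'
  · intro t ht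
    have hle : lowerNorm H z ≤ 0 := not_lt.1 (lowerNorm_pos_iff.not.2 hz)
    exact .of_forall fun w ↦ (ht.trans_le hle).trans_le (lowerNorm_nonneg H w)

theorem tendsto_lowerNorm_cobounded_atTop [Nontrivial E] (H : E →L[ℂ] E) :
    Tendsto (lowerNorm H) (Bornology.cobounded ℂ) atTop := by
  have hnorm : Tendsto (fun z ↦ ‖resolvent H z‖) (Bornology.cobounded ℂ) (𝓝[>] 0) := by
    refine tendsto_nhdsWithin_iff.2
      ⟨tendsto_zero_iff_norm_tendsto_zero.1 (spectrum.resolvent_tendsto_cobounded H), ?_⟩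
    filter_upwards [spectrum.eventually_isUnit_resolvent H] with z hz
    exact norm_pos_iff.2 hz.ne_zero
  exact hnorm.inv_tendsto_nhdsGT_zero.congr fun z ↦ (lowerNorm_eq_inv_norm_resolvent H z).symm

theorem isBounded_pseudoSpectrum [Nontrivial E] (H : E →L[ℂ] E) (ε : ℝ) :
    Bornology.IsBounded (pseudoSpectrum H ε) := by
  rw [Bornology.isBounded_def]
  filter_upwards [(tendsto_lowerNorm_cobounded_atTop H).eventually_gt_atTop ε] with z hz
  exact hz.not_ge

theorem isCompact_pseudoSpectrum [Nontrivial E] (H : E →L[ℂ] E) (ε : ℝ) :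
    IsCompact (pseudoSpectrum H ε) :=
  isCompact_of_isClosed_isBounded ((lowerSemicontinuous_lowerNorm H).isClosed_preimage ε)
    (isBounded_pseudoSpectrum H ε)

theorem not_isLocalMin_lowerNorm [Nontrivial E] {H : E →L[ℂ] E} (hz : z ∈ resolventSet ℂ H) :
    ¬IsLocalMin (lowerNorm H) z := by
  intro hmin
  obtain ⟨R, hR, hball⟩ := nhds_basis_closedBall.eventually_iff.1
    (hmin.and ((spectrum.isOpen_resolventSet H).mem_nhds hz))
  refine (norm_resolvent_lt hR (fun w hw ↦ (hball hw).2) fun w hw ↦ ?_).false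
  obtain ⟨hle, hw'⟩ := hball (sphere_subset_closedBall hw)
  simp only [lowerNorm_eq_inv_norm_resolvent] at hle
  exact (inv_le_inv₀ (norm_resolvent_pos_iff.2 hz) (norm_resolvent_pos_iff.2 hw')).1 hle

theorem tendsto_hausdorffDist_pseudoSpectrum [Nontrivial E] (H : E →L[ℂ] E) {ε : ℝ} (hε : 0 < ε) :
    Tendsto (fun p : ℝ × ℝ ↦ hausdorffDist (pseudoSpectrum H p.1) (pseudoSpectrum H p.2))
      (𝓝 (ε, ε)) (𝓝 0) :=
  tendsto_hausdorffDist_sublevel (lowerSemicontinuous_lowerNorm H) (lt_add_one ε)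
    (isCompact_pseudoSpectrum H (ε + 1))
    fun _ hz ↦ not_isLocalMin_lowerNorm (lowerNorm_pos_iff.1 (hz ▸ hε))

end LowerNorm

/-- **Continuity of the pseudospectrum in the level.** For any bounded operator
`H` on a nontrivial complex Hilbert space and `ε > 0`, for every `δ > 0` there
is `0 < τ < ε` with `d_H(Spec_{ε−τ}(H), Spec_{ε+τ}(H)) ≤ δ`. -/
theorem pseudospectrum_level_continuity [Nontrivial E] (H : E →L[ℂ] E)
    (ε : ℝ) (hε : 0 < ε) (δ : ℝ) (hδ : 0 < δ) :
    ∃ τ : ℝ, 0 < τ ∧ τ < ε ∧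
      Metric.hausdorffDist (pseudoSpectrum H (ε - τ)) (pseudoSpectrum H (ε + τ)) ≤ δ := by
  have hlevels : Tendsto (fun τ ↦ (ε - τ, ε + τ)) (𝓝[>] 0) (𝓝 (ε, ε)) :=
    ((by fun_prop : Continuous fun τ : ℝ ↦ (ε - τ, ε + τ)).tendsto' 0 (ε, ε) (by simp)).mono_left
      nhdsWithin_le_nhds
  have hclose := ((tendsto_hausdorffDist_pseudoSpectrum H hε).comp hlevels).eventually_le_const hδ
  obtain ⟨τ, hτ, hpos, hlt⟩ := (hclose.and (Ioo_mem_nhdsGT hε)).exists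
  exact ⟨τ, hpos, hlt, hτ⟩
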